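/- arXiv:math/9806050 — 2 statements merged into one kernel-verified Lean document; each statement's English description precedes it below -/
import Mathlib

section
/- (Solution to the word problem in SB_3.) For all u, v ∈ SB_3 and all b, c ∈ B_3, the equality u · τ_1 · ι(b) = v · τ_1 · ι(c) holds in SB_3 if and only if b c⁻¹ lies in the subgroup H_3 of B_3 generated by σ_1 and (σ_2 σ_1)³ and u · ι(b) = v · ι(c) holds in SB_3. -/
/-!
Since `τ₂ = (σ₁ σ₂) τ₁ (σ₁ σ₂)⁻¹`, the remaining relations involving `τ₁`, `τ₂` say exactly that
`τ₁` commutes with `σ₁` and with `σ₂ σ₁² σ₂`. These two braids generate `H₃`, because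
`(σ₂ σ₁)³ = (σ₂ σ₁² σ₂) σ₁²`. Hence `SB₃` is the semidirect product of the free monoid on the set
`B₃ / H₃` (the coset `x H₃` standing for `x τ₁ x⁻¹`) with `B₃`: every element has a unique normal
form `(x₁ τ₁ x₁⁻¹) ⋯ (xₖ τ₁ xₖ⁻¹) g`, where only the cosets `xᵢ H₃` matter.

If `u` has normal form `(w, g)`, then `u τ₁ ι(b)` has normal form `(w · gH₃, g b)`. An equality
`u τ₁ ι(b) = v τ₁ ι(c)`, with `v` of normal form `(w', g')`, thus means `w = w'`, `g H₃ = g' H₃`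
and `g b = g' c`, that is, `b c⁻¹ = g⁻¹ g' ∈ H₃` and `u ι(b) = v ι(c)`.

The normal form is obtained from the right action `SB3.act` of `SB₃` on pairs (word, braid), applied
to the pair (empty word, 1). It determines the element by `SB3.eval_act`. The converse implication
only needs that `H₃` commutes with `τ₁` (`SB3.commute_of_mem_H3`).
-/

/-- Generators of the singular braid monoid on 3 strands. -/
inductive SB3Gen : Type
  | s1 | s2 | sb1 | sb2 | t1 | t2

open FreeMonoid in
/-- Defining relations of the singular braid monoid on 3 strands. -/
inductive SB3Rel : FreeMonoid SB3Gen → FreeMonoid SB3Gen → Prop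
  | inv_s1 : SB3Rel (of .s1 * of .sb1) 1
  | inv_s1' : SB3Rel (of .sb1 * of .s1) 1
  | inv_s2 : SB3Rel (of .s2 * of .sb2) 1
  | inv_s2' : SB3Rel (of .sb2 * of .s2) 1
  | braid : SB3Rel (of .s1 * of .s2 * of .s1) (of .s2 * of .s1 * of .s2)
  | tau_s : SB3Rel (of .t2 * of .s1 * of .s2) (of .s1 * of .s2 * of .t1)
  | s_tau : SB3Rel (of .s2 * of .s1 * of .t2) (of .t1 * of .s2 * of .s1)
  | comm1 : SB3Rel (of .s1 * of .t1) (of .t1 * of .s1)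
  | comm2 : SB3Rel (of .s2 * of .t2) (of .t2 * of .s2)

/-- The singular braid monoid on 3 strands. -/
abbrev SB3 : Type := PresentedMonoid SB3Rel

/-- The generators of `SB3` as elements. -/
abbrev SB3.g (x : SB3Gen) : SB3 := PresentedMonoid.of SB3Rel x

noncomputable section

open LaurentPolynomial Polynomial

/-- `R = ℤ[t,t⁻¹][y]`. -/
abbrev RR : Type := Polynomial (LaurentPolynomial ℤ)

/-- The element `t` of `R`. -/
abbrev Rt : RR := Polynomial.C (LaurentPolynomial.T 1)
/-- The element `t⁻¹` of `R`. -/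
abbrev Rtinv : RR := Polynomial.C (LaurentPolynomial.T (-1))
/-- The element `y` of `R`. -/
abbrev Ry : RR := Polynomial.X

/-- The defining property of the singular Burau representation. -/
def IsSingularBurau (φ : SB3 →* Matrix (Fin 2) (Fin 2) RR) : Prop :=
  φ (SB3.g .s1) = !![-Rt, 1; 0, 1] ∧
  φ (SB3.g .s2) = !![1, 0; Rt, -Rt] ∧
  φ (SB3.g .t1) = !![1 - Ry - Rt * Ry, Ry; 0, 1] ∧
  φ (SB3.g .sb1) = !![-Rtinv, Rtinv; 0, 1] ∧
  φ (SB3.g .sb2) = !![1, 0; 1, -Rtinv] ∧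
  φ (SB3.g .t2) =
    !![-Rt, 1; 0, 1] * !![1, 0; Rt, -Rt] * !![1 - Ry - Rt * Ry, Ry; 0, 1] *
      !![1, 0; 1, -Rtinv] * !![-Rtinv, Rtinv; 0, 1]

end
/-- The defining relator of the braid group on 3 strands. -/
def braidRels3 : Set (FreeGroup (Fin 2)) :=
  {FreeGroup.of 0 * FreeGroup.of 1 * FreeGroup.of 0 *
    (FreeGroup.of 1 * FreeGroup.of 0 * FreeGroup.of 1)⁻¹}

/-- The braid group on 3 strands. -/
abbrev B3 : Type := PresentedGroup braidRels3

/-- The generator `σ₁` of `B3`. -/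
abbrev B3.sig1 : B3 := PresentedGroup.of 0
/-- The generator `σ₂` of `B3`. -/
abbrev B3.sig2 : B3 := PresentedGroup.of 1

/-- The subgroup `H₃ = ⟨σ₁, (σ₂ σ₁)³⟩` of `B₃`. -/
abbrev B3.H3 : Subgroup B3 := Subgroup.closure {B3.sig1, (B3.sig2 * B3.sig1) ^ 3}

theorem B3.braid : B3.sig1 * B3.sig2 * B3.sig1 = B3.sig2 * B3.sig1 * B3.sig2 := by
  have h : PresentedGroup.mk braidRels3 (FreeGroup.of 0 * FreeGroup.of 1 * FreeGroup.of 0 *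
      (FreeGroup.of 1 * FreeGroup.of 0 * FreeGroup.of 1)⁻¹) = 1 :=
    PresentedGroup.one_of_mem rfl
  rw [map_mul, map_inv, mul_inv_eq_one] at h
  simp only [map_mul] at h
  exact h

theorem B3.sig1_mem_H3 : B3.sig1 ∈ B3.H3 := Subgroup.subset_closure (by simp)

theorem B3.twist_mem_H3 : B3.sig2 * B3.sig1 * B3.sig1 * B3.sig2 ∈ B3.H3 := by
  have h : (B3.sig2 * B3.sig1) ^ 3 ∈ B3.H3 := Subgroup.subset_closure (by simp)
  -- `(σ₂ σ₁)³ = σ₂ σ₁ (σ₂ σ₁ σ₂) σ₁ = (σ₂ σ₁ σ₁ σ₂) σ₁²` by the braid relation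
  have e : (B3.sig2 * B3.sig1) ^ 3 =
      B3.sig2 * B3.sig1 * B3.sig1 * B3.sig2 * (B3.sig1 * B3.sig1) := by
    calc (B3.sig2 * B3.sig1) ^ 3
        = B3.sig2 * B3.sig1 * (B3.sig2 * B3.sig1 * B3.sig2) * B3.sig1 := by
          simp only [pow_succ, pow_zero, one_mul, mul_assoc]
      _ = _ := by rw [← B3.braid]; simp only [mul_assoc]
  rw [e] at h
  exact (Subgroup.mul_mem_cancel_right _ (mul_mem B3.sig1_mem_H3 B3.sig1_mem_H3)).1 h

/-- Normal forms of elements of `SB₃`. The pair `([xₖ H₃, …, x₁ H₃], g)` stands for the product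
`(x₁ τ₁ x₁⁻¹) ⋯ (xₖ τ₁ xₖ⁻¹) g`; the list is kept in reverse order, so that right multiplication
acts at its head. -/
abbrev SB3.NF : Type := List (B3 ⧸ B3.H3) × B3

/-- Right multiplication of a normal form by a generator of `SB₃`. As
`τ₂ = (σ₁ σ₂) τ₁ (σ₁ σ₂)⁻¹`, the generator `τ₂` contributes the coset of `g σ₁ σ₂`. -/
def SB3.step : SB3Gen → SB3.NF → SB3.NF
  | .s1, p => (p.1, p.2 * B3.sig1)
  | .s2, p => (p.1, p.2 * B3.sig2)
  | .sb1, p => (p.1, p.2 * B3.sig1⁻¹)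
  | .sb2, p => (p.1, p.2 * B3.sig2⁻¹)
  | .t1, p => ((p.2 : B3 ⧸ B3.H3) :: p.1, p.2)
  | .t2, p => (((p.2 * B3.sig1 * B3.sig2 : B3) : B3 ⧸ B3.H3) :: p.1, p.2)

/-- The right action of `SB₃` on normal forms, as a homomorphism to the opposite of the monoid of
self-maps. -/
def SB3.act : SB3 →* (Function.End SB3.NF)ᵐᵒᵖ :=
  PresentedMonoid.lift
    (fun x => (MulOpposite.op (SB3.step x) : (Function.End SB3.NF)ᵐᵒᵖ)) (by
    intro a b h
    apply MulOpposite.unop_injective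
    funext p
    obtain ⟨w, g⟩ := p
    -- both sides are definitionally the pairs obtained by applying the letters from left to right
    cases h with
    | inv_s1 => exact congrArg (Prod.mk w) (mul_inv_cancel_right g B3.sig1)
    | inv_s1' => exact congrArg (Prod.mk w) (inv_mul_cancel_right g B3.sig1)
    | inv_s2 => exact congrArg (Prod.mk w) (mul_inv_cancel_right g B3.sig2)
    | inv_s2' => exact congrArg (Prod.mk w) (inv_mul_cancel_right g B3.sig2)
    | braid =>
      change (w, g * B3.sig1 * B3.sig2 * B3.sig1) = (w, g * B3.sig2 * B3.sig1 * B3.sig2)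
      simpa only [mul_assoc, Prod.mk.injEq, mul_right_inj, true_and] using B3.braid
    | tau_s => rfl
    | s_tau =>
      refine congrArg (fun q => (q :: w, g * B3.sig2 * B3.sig1)) (QuotientGroup.eq.2 ?_).symm
      change g⁻¹ * (g * B3.sig2 * B3.sig1 * B3.sig1 * B3.sig2) ∈ B3.H3
      simpa only [mul_assoc, inv_mul_cancel_left] using B3.twist_mem_H3
    | comm1 =>
      refine congrArg (fun q => (q :: w, g * B3.sig1)) (QuotientGroup.eq.2 ?_).symm
      change g⁻¹ * (g * B3.sig1) ∈ B3.H3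
      simpa only [inv_mul_cancel_left] using B3.sig1_mem_H3
    | comm2 =>
      refine congrArg (fun q => (q :: w, g * B3.sig2)) (QuotientGroup.eq.2 ?_).symm
      change (g * B3.sig1 * B3.sig2)⁻¹ * (g * B3.sig2 * B3.sig1 * B3.sig2) ∈ B3.H3
      have e : g * B3.sig2 * B3.sig1 * B3.sig2 = g * B3.sig1 * B3.sig2 * B3.sig1 := by
        simpa only [mul_assoc, mul_right_inj] using B3.braid.symm
      rw [e, inv_mul_cancel_left]
      exact B3.sig1_mem_H3)

theorem SB3.act_of (x : SB3Gen) (p : SB3.NF) : (SB3.act (SB3.g x)).unop p = SB3.step x p :=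
  rfl

theorem SB3.act_mul (u v : SB3) (p : SB3.NF) :
    (SB3.act (u * v)).unop p = (SB3.act v).unop ((SB3.act u).unop p) := by
  rw [map_mul]; rfl

theorem SB3.braid_tau1 :
    SB3.g .t1 * (SB3.g .s2 * SB3.g .s1 * SB3.g .s2) =
      SB3.g .s2 * SB3.g .s1 * SB3.g .s2 * SB3.g .t2 := by
  have e1 : SB3.g .s2 * SB3.g .s1 * SB3.g .t2 = SB3.g .t1 * SB3.g .s2 * SB3.g .s1 :=
    PresentedMonoid.mk_eq_mk_of_rel SB3Rel.s_tau
  have e2 : SB3.g .s2 * SB3.g .t2 = SB3.g .t2 * SB3.g .s2 :=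
    PresentedMonoid.mk_eq_mk_of_rel SB3Rel.comm2
  rw [mul_assoc _ (SB3.g .s2) (SB3.g .t2), e2, ← mul_assoc _ (SB3.g .t2), e1]
  simp only [mul_assoc]

theorem SB3.braid_tau2 :
    SB3.g .t2 * (SB3.g .s1 * SB3.g .s2 * SB3.g .s1) =
      SB3.g .s1 * SB3.g .s2 * SB3.g .s1 * SB3.g .t1 := by
  have e1 : SB3.g .t2 * SB3.g .s1 * SB3.g .s2 = SB3.g .s1 * SB3.g .s2 * SB3.g .t1 :=
    PresentedMonoid.mk_eq_mk_of_rel SB3Rel.tau_s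
  have e2 : SB3.g .s1 * SB3.g .t1 = SB3.g .t1 * SB3.g .s1 :=
    PresentedMonoid.mk_eq_mk_of_rel SB3Rel.comm1
  rw [mul_assoc _ (SB3.g .s1) (SB3.g .t1), e2, ← mul_assoc _ (SB3.g .t1), ← e1]
  simp only [mul_assoc]

/-- `H₃` commutes with `τ₁`. For the generator `(σ₂ σ₁)³ = Δ²`, where `Δ = σ₁ σ₂ σ₁`, this holds
because conjugation by `Δ` exchanges `τ₁` and `τ₂`. -/
theorem SB3.commute_of_mem_H3 (ι : B3 →* SB3)
    (h1 : ι B3.sig1 = SB3.g .s1) (h2 : ι B3.sig2 = SB3.g .s2)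
    {h : B3} (hh : h ∈ B3.H3) : ι h * SB3.g .t1 = SB3.g .t1 * ι h := by
  induction hh using Subgroup.closure_induction with
  | mem x hx =>
    rcases hx with rfl | rfl
    · rw [h1]
      exact PresentedMonoid.mk_eq_mk_of_rel SB3Rel.comm1
    · have e : ι ((B3.sig2 * B3.sig1) ^ 3) = SB3.g .s2 * SB3.g .s1 * SB3.g .s2 *
          (SB3.g .s1 * SB3.g .s2 * SB3.g .s1) := by
        simp only [map_mul, h1, h2, pow_succ, pow_zero, one_mul, mul_assoc]
      rw [e, mul_assoc, ← SB3.braid_tau2, ← mul_assoc, ← SB3.braid_tau1]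
      simp only [mul_assoc]
  | one => simp
  | mul x y _ _ hx hy => rw [map_mul, mul_assoc, hy, ← mul_assoc, hx, mul_assoc]
  | inv x _ hx =>
    have e : ι x⁻¹ * ι x = 1 := by rw [← map_mul]; simp
    have e' : ι x * ι x⁻¹ = 1 := by rw [← map_mul]; simp
    calc ι x⁻¹ * SB3.g .t1 = ι x⁻¹ * (SB3.g .t1 * ι x) * ι x⁻¹ := by
          rw [mul_assoc, mul_assoc, e', mul_one]
      _ = SB3.g .t1 * ι x⁻¹ := by rw [← hx, ← mul_assoc, e, one_mul]

theorem SB3.conj_eq (ι : B3 →* SB3)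
    (h1 : ι B3.sig1 = SB3.g .s1) (h2 : ι B3.sig2 = SB3.g .s2) (x y : B3)
    (hxy : x⁻¹ * y ∈ B3.H3) :
    ι x * SB3.g .t1 * ι x⁻¹ = ι y * SB3.g .t1 * ι y⁻¹ := by
  obtain ⟨h, rfl⟩ : ∃ h, y = x * h := ⟨x⁻¹ * y, by group⟩
  rw [inv_mul_cancel_left] at hxy
  have e : ι h * ι h⁻¹ = 1 := by rw [← map_mul]; simp
  rw [mul_inv_rev, map_mul, map_mul, mul_assoc (ι x) (ι h), SB3.commute_of_mem_H3 ι h1 h2 hxy]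
  simp only [mul_assoc]
  rw [← mul_assoc (ι h), e, one_mul]

/-- The conjugate `x τ₁ x⁻¹`, as a function of the coset `x H₃`. -/
def SB3.conj (ι : B3 →* SB3)
    (h1 : ι B3.sig1 = SB3.g .s1) (h2 : ι B3.sig2 = SB3.g .s2) (q : B3 ⧸ B3.H3) : SB3 :=
  Quotient.liftOn' q (fun x => ι x * SB3.g .t1 * ι x⁻¹)
    (fun x y h => SB3.conj_eq ι h1 h2 x y (QuotientGroup.leftRel_apply.1 h))

/-- The element of `SB₃` represented by a normal form. -/
def SB3.eval (ι : B3 →* SB3)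
    (h1 : ι B3.sig1 = SB3.g .s1) (h2 : ι B3.sig2 = SB3.g .s2) (p : SB3.NF) : SB3 :=
  (p.1.reverse.map (SB3.conj ι h1 h2)).prod * ι p.2

theorem SB3.eval_cons (ι : B3 →* SB3)
    (h1 : ι B3.sig1 = SB3.g .s1) (h2 : ι B3.sig2 = SB3.g .s2)
    (w : List (B3 ⧸ B3.H3)) (x g : B3) :
    SB3.eval ι h1 h2 ((x : B3 ⧸ B3.H3) :: w, g) =
      SB3.eval ι h1 h2 (w, x) * SB3.g .t1 * ι (x⁻¹ * g) := by
  have e : SB3.conj ι h1 h2 (x : B3 ⧸ B3.H3) = ι x * SB3.g .t1 * ι x⁻¹ := rfl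
  simp [SB3.eval, e, mul_assoc]

theorem SB3.eval_mul (ι : B3 →* SB3)
    (h1 : ι B3.sig1 = SB3.g .s1) (h2 : ι B3.sig2 = SB3.g .s2)
    (w : List (B3 ⧸ B3.H3)) (g b : B3) :
    SB3.eval ι h1 h2 (w, g * b) = SB3.eval ι h1 h2 (w, g) * ι b := by
  simp [SB3.eval, mul_assoc]

theorem SB3.eval_step (ι : B3 →* SB3)
    (h1 : ι B3.sig1 = SB3.g .s1) (h2 : ι B3.sig2 = SB3.g .s2)
    (h3 : ι B3.sig1⁻¹ = SB3.g .sb1) (h4 : ι B3.sig2⁻¹ = SB3.g .sb2) (x : SB3Gen) (p : SB3.NF) :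
    SB3.eval ι h1 h2 (SB3.step x p) = SB3.eval ι h1 h2 p * SB3.g x := by
  obtain ⟨w, g⟩ := p
  cases x
  · rw [← h1]; exact SB3.eval_mul ι h1 h2 w g _
  · rw [← h2]; exact SB3.eval_mul ι h1 h2 w g _
  · rw [← h3]; exact SB3.eval_mul ι h1 h2 w g _
  · rw [← h4]; exact SB3.eval_mul ι h1 h2 w g _
  · simp only [SB3.step, SB3.eval_cons, inv_mul_cancel, map_one, mul_one]
  · have e1 : SB3.g .t2 * SB3.g .s1 * SB3.g .s2 = SB3.g .s1 * SB3.g .s2 * SB3.g .t1 :=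
      PresentedMonoid.mk_eq_mk_of_rel SB3Rel.tau_s
    have e2 : (g * B3.sig1 * B3.sig2)⁻¹ * g = (B3.sig1 * B3.sig2)⁻¹ := by group
    have e3 : ι (B3.sig1 * B3.sig2) * ι (B3.sig1 * B3.sig2)⁻¹ = 1 := by
      rw [← map_mul, mul_inv_cancel, map_one]
    simp only [SB3.step, SB3.eval_cons, e2]
    rw [mul_assoc g, SB3.eval_mul, mul_assoc _ (ι (B3.sig1 * B3.sig2))]
    conv_lhs => enter [1, 2]; rw [map_mul, h1, h2, ← e1, mul_assoc, ← h1, ← h2, ← map_mul]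
    rw [mul_assoc, mul_assoc, e3, mul_one]

/-- Evaluation turns the right action on normal forms into right multiplication in `SB₃`. -/
theorem SB3.eval_act (ι : B3 →* SB3)
    (h1 : ι B3.sig1 = SB3.g .s1) (h2 : ι B3.sig2 = SB3.g .s2)
    (h3 : ι B3.sig1⁻¹ = SB3.g .sb1) (h4 : ι B3.sig2⁻¹ = SB3.g .sb2) (u : SB3) (p : SB3.NF) :
    SB3.eval ι h1 h2 ((SB3.act u).unop p) = SB3.eval ι h1 h2 p * u := by
  have hu : u ∈ Submonoid.closure (Set.range (PresentedMonoid.of SB3Rel)) := by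
    rw [PresentedMonoid.closure_range_of]; trivial
  induction hu using Submonoid.closure_induction generalizing p with
  | mem x hx =>
    obtain ⟨x, rfl⟩ := hx
    rw [SB3.act_of, SB3.eval_step ι h1 h2 h3 h4]
  | one => rw [map_one, mul_one]; rfl
  | mul x y _ _ hx hy => rw [SB3.act_mul, hy, hx, mul_assoc]

/-- A braid acts on normal forms by right multiplication of the braid component. -/
theorem SB3.act_braid (ι : B3 →* SB3)
    (h1 : ι B3.sig1 = SB3.g .s1) (h2 : ι B3.sig2 = SB3.g .s2)
    (h3 : ι B3.sig1⁻¹ = SB3.g .sb1) (h4 : ι B3.sig2⁻¹ = SB3.g .sb2) (b : B3) (p : SB3.NF) :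
    (SB3.act (ι b)).unop p = (p.1, p.2 * b) := by
  have hb : b ∈ Subgroup.closure (Set.range (PresentedGroup.of (rels := braidRels3))) := by
    rw [PresentedGroup.closure_range_of]; trivial
  induction hb using Subgroup.closure_induction'' generalizing p with
  | mem x hx =>
    obtain ⟨i, rfl⟩ := hx
    fin_cases i
    · exact (congrArg (fun z => (SB3.act z).unop p) h1).trans (SB3.act_of _ _)
    · exact (congrArg (fun z => (SB3.act z).unop p) h2).trans (SB3.act_of _ _)
  | inv_mem x hx =>
    obtain ⟨i, rfl⟩ := hx
    fin_cases i
    · exact (congrArg (fun z => (SB3.act z).unop p) h3).trans (SB3.act_of _ _)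
    · exact (congrArg (fun z => (SB3.act z).unop p) h4).trans (SB3.act_of _ _)
  | one => rw [map_one, map_one, mul_one]; rfl
  | mul x y _ _ hx hy => rw [map_mul, SB3.act_mul, hx, hy, mul_assoc]

/-- solution to the word problem in `SB3`: for the natural
homomorphism `ι : B3 → SB3`, and all `u v ∈ SB3`, `b c ∈ B3`, one has
`u τ₁ ι(b) = v τ₁ ι(c)` iff `b c⁻¹ ∈ H₃ = ⟨σ₁, (σ₂ σ₁)³⟩` and `u ι(b) = v ι(c)`. -/
theorem word_problem_SB3 (ι : B3 →* SB3)
    (h1 : ι B3.sig1 = SB3.g .s1) (h2 : ι B3.sig2 = SB3.g .s2)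
    (h3 : ι B3.sig1⁻¹ = SB3.g .sb1) (h4 : ι B3.sig2⁻¹ = SB3.g .sb2)
    (u v : SB3) (b c : B3) :
    u * SB3.g .t1 * ι b = v * SB3.g .t1 * ι c ↔
      (b * c⁻¹ ∈ Subgroup.closure {B3.sig1, (B3.sig2 * B3.sig1) ^ 3} ∧
        u * ι b = v * ι c) := by
  constructor
  · intro h
    have hu := SB3.eval_act ι h1 h2 h3 h4 u ([], 1)
    have hv := SB3.eval_act ι h1 h2 h3 h4 v ([], 1)
    have hone : SB3.eval ι h1 h2 ([], 1) = 1 := by simp [SB3.eval]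
    have hact := congrArg (fun z => (SB3.act z).unop ([], 1)) h
    simp only [SB3.act_mul, SB3.act_of, SB3.act_braid ι h1 h2 h3 h4] at hact
    rw [hone, one_mul] at hu hv
    generalize (SB3.act u).unop ([], 1) = p at hu hact
    generalize (SB3.act v).unop ([], 1) = p' at hv hact
    obtain ⟨w, g⟩ := p
    obtain ⟨w', g'⟩ := p'
    simp only [SB3.step, Prod.mk.injEq, List.cons.injEq] at hact
    obtain ⟨⟨hq, rfl⟩, hg⟩ := hact
    constructor
    · have e : b * c⁻¹ = g⁻¹ * g' := by
        rw [mul_inv_eq_iff_eq_mul, mul_assoc, ← hg, inv_mul_cancel_left]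
      rw [e]
      exact QuotientGroup.eq.1 hq
    · rw [← hu, ← hv, ← SB3.eval_mul, ← SB3.eval_mul, hg]
  · rintro ⟨hh, h⟩
    obtain ⟨k, rfl⟩ : ∃ k, b = k * c := ⟨b * c⁻¹, by group⟩
    rw [mul_inv_cancel_right] at hh
    have e : ι c * ι c⁻¹ = 1 := by rw [← map_mul, mul_inv_cancel, map_one]
    have hv : u * ι k = v := by
      have := congrArg (· * ι c⁻¹) h
      simpa only [map_mul, mul_assoc, e, mul_one] using this
    rw [← hv, map_mul, mul_assoc u (ι k), SB3.commute_of_mem_H3 ι h1 h2 hh]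
    simp only [mul_assoc]
end

section
/- The natural monoid homomorphism from SB_3 to SG_3 (sending σ_i ↦ σ_i, σ̄_i ↦ σ_i⁻¹, τ_i ↦ τ_i) is injective; that is, SB_3 embeds into the group SG_3. -/
/-- Generators of the group `SG3` (four-generator version). -/
inductive SG3pGen : Type
  | s1 | s2 | t1 | t2

open FreeGroup in
/-- Relators of `SG3`: the defining relations of `SB3` with `σ̄_i = σ_i⁻¹`. -/
def SG3pRels : Set (FreeGroup SG3pGen) :=
  {of .s1 * of .s2 * of .s1 * (of .s2 * of .s1 * of .s2)⁻¹,
   of .t2 * of .s1 * of .s2 * (of .s1 * of .s2 * of .t1)⁻¹,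
   of .s2 * of .s1 * of .t2 * (of .t1 * of .s2 * of .s1)⁻¹,
   of .s1 * of .t1 * (of .t1 * of .s1)⁻¹,
   of .s2 * of .t2 * (of .t2 * of .s2)⁻¹}

/-- The group `SG3`. -/
abbrev SG3p : Type := PresentedGroup SG3pRels

/-! ### Adjoining a letter to a group, in a monoid and in an HNN extension -/

namespace PositiveWord

open HNNExtension

variable {G M : Type*} [Group G] [Monoid M] (ι : G →* M) (x : M)

/-- The subgroup of those `g` whose image in the monoid `M` commutes with `x`. -/
def commSubgroup : Subgroup G where
  carrier := {g | Commute (ι g) x}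
  one_mem' := by simp
  mul_mem' := by
    intro a b ha hb
    simp only [Set.mem_ofPred_eq, map_mul] at *
    exact ha.mul_left hb
  inv_mem' := by
    intro a ha
    simp only [Set.mem_ofPred_eq] at *
    -- `ι a⁻¹` is the inverse of the unit `ι a`
    exact Commute.units_inv_left (u := MonoidHom.toHomUnits ι a) (by simpa using ha)

/-- The HNN extension of `G` whose stable letter commutes with `commSubgroup ι x`. -/
abbrev Ext : Type _ :=
  HNNExtension G (commSubgroup ι x) (commSubgroup ι x) (MulEquiv.refl _)

/-- The element `g₀ x g₁ x ⋯ x gₙ` of `M`, where `L = [g₁, …, gₙ]`. -/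
def eval (g₀ : G) (L : List G) : M := ι g₀ * (L.map fun g => x * ι g).prod

/-- The element `g₀ t g₁ t ⋯ t gₙ` of the HNN extension, where `L = [g₁, …, gₙ]`. -/
def hnn (g₀ : G) (L : List G) : Ext ι x := of g₀ * (L.map fun g => t * of g).prod

/-- The positive word `g₀ t g₁ t ⋯ t gₙ` as a reduced word: it has no factor `t^u g t^(-u)`. -/
def toReduced (g₀ : G) (L : List G) :
    NormalWord.ReducedWord G (commSubgroup ι x) (commSubgroup ι x) where
  head := g₀
  toList := L.map fun g => (1, g)
  chain := by
    rw [List.isChain_map]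
    exact List.Pairwise.isChain (List.pairwise_of_forall fun _ _ _ => rfl)

lemma prod_toReduced (g₀ : G) (L : List G) :
    (toReduced ι x g₀ L).prod (MulEquiv.refl _) = hnn ι x g₀ L := by
  simp [toReduced, NormalWord.ReducedWord.prod, hnn, Function.comp_def]

lemma eval_cons (g₀ g₁ : G) (L : List G) :
    eval ι x g₀ (g₁ :: L) = ι g₀ * (x * eval ι x g₁ L) := by
  simp [eval, mul_assoc]

lemma hnn_cons (g₀ g₁ : G) (L : List G) :
    hnn ι x g₀ (g₁ :: L) = of g₀ * (t * hnn ι x g₁ L) := by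
  simp [hnn, mul_assoc]

lemma mul_eval (g g₀ : G) (L : List G) : ι g * eval ι x g₀ L = eval ι x (g * g₀) L := by
  simp [eval, mul_assoc]

lemma of_mul_hnn (g g₀ : G) (L : List G) : of g * hnn ι x g₀ L = hnn ι x (g * g₀) L := by
  simp [hnn, mul_assoc]

lemma t_mul_of_comm {c : G} (hc : c ∈ commSubgroup ι x) :
    (t : Ext ι x) * of c = of c * t :=
  t_mul_of (φ := MulEquiv.refl _) (⟨c, hc⟩ : commSubgroup ι x)

/-- Positive words that agree in the HNN extension agree in the monoid. -/
theorem eval_eq_of_hnn_eq (g h : G) (L K : List G) (H : hnn ι x g L = hnn ι x h K) :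
    eval ι x g L = eval ι x h K := by
  have hB := ReducedWord.map_fst_eq_and_of_prod_eq (MulEquiv.refl _)
    (w₁ := toReduced ι x g L) (w₂ := toReduced ι x h K) (by simpa only [prod_toReduced] using H)
  have hlen : L.length = K.length := by simpa [toReduced] using congrArg List.length hB.1
  induction L generalizing g h K with
  | nil =>
    obtain rfl : K = [] := List.length_eq_zero_iff.1 hlen.symm
    have : g = h := of_injective (MulEquiv.refl _) (by simpa [hnn] using H)
    rw [this]
  | cons a L ih =>
    obtain _ | ⟨b, K⟩ := K
    · simp at hlen
    have hc : g⁻¹ * h ∈ commSubgroup ι x := by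
      simpa [toReduced] using hB.2 1 (by simp [toReduced])
    obtain ⟨c, rfl⟩ : ∃ c, h = g * c := ⟨g⁻¹ * h, by group⟩
    rw [inv_mul_cancel_left] at hc
    have H' : hnn ι x a L = hnn ι x (c * b) K := by
      rw [hnn_cons, hnn_cons, map_mul, mul_assoc, ← mul_assoc (of c), ← t_mul_of_comm ι x hc,
        mul_assoc, of_mul_hnn] at H
      exact mul_left_cancel (mul_left_cancel H)
    have hE := ih a (c * b) K H'
      (ReducedWord.map_fst_eq_and_of_prod_eq (MulEquiv.refl _)
        (by simpa only [prod_toReduced] using H')) (by simpa using hlen)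
    have hc' : ι c * x = x * ι c := hc
    rw [eval_cons, eval_cons, hE, ← mul_eval, map_mul, mul_assoc (ι g), ← mul_assoc (ι c), hc',
      mul_assoc]

/-- If `M` is generated by the image of `G` and by `x`, its elements are given by positive words. -/
lemma exists_eval_eq (hgen : Submonoid.closure (insert x (Set.range ι)) = ⊤) (m : M) :
    ∃ g L, eval ι x g L = m := by
  induction (hgen ▸ Submonoid.mem_top m : m ∈ Submonoid.closure (insert x (Set.range ι)))
    using Submonoid.closure_induction_left with
  | one => exact ⟨1, [], by simp [eval]⟩
  | mul_left y hy m _ ih =>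
    obtain ⟨g, L, rfl⟩ := ih
    obtain rfl | ⟨k, rfl⟩ := hy
    · exact ⟨1, g :: L, by simp [eval_cons]⟩
    · exact ⟨k * g, L, (mul_eval ι x k g L).symm⟩

/-- A homomorphism to the HNN extension that is the obvious one on generators is injective. -/
theorem injective_of_generators (hgen : Submonoid.closure (insert x (Set.range ι)) = ⊤)
    (θ : M →* Ext ι x) (hι : ∀ g, θ (ι g) = of g) (hx : θ x = t) :
    Function.Injective θ := by
  have key : ∀ g L, θ (eval ι x g L) = hnn ι x g L := by
    intro g L
    simp [eval, hnn, map_list_prod, hι, hx, Function.comp_def]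
  intro m n hmn
  obtain ⟨g, L, rfl⟩ := exists_eval_eq ι x hgen m
  obtain ⟨h, K, rfl⟩ := exists_eval_eq ι x hgen n
  rw [key, key] at hmn
  exact eval_eq_of_hnn_eq ι x g h L K hmn

end PositiveWord

/-! ### The braid group inside `SB3` -/

namespace SB3

open PresentedMonoid

lemma s1_sb1 : g .s1 * g .sb1 = 1 := mk_eq_mk_of_rel .inv_s1
lemma sb1_s1 : g .sb1 * g .s1 = 1 := mk_eq_mk_of_rel .inv_s1'
lemma s2_sb2 : g .s2 * g .sb2 = 1 := mk_eq_mk_of_rel .inv_s2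
lemma sb2_s2 : g .sb2 * g .s2 = 1 := mk_eq_mk_of_rel .inv_s2'
lemma braid : g .s1 * g .s2 * g .s1 = g .s2 * g .s1 * g .s2 := mk_eq_mk_of_rel .braid
lemma tau_s : g .t2 * g .s1 * g .s2 = g .s1 * g .s2 * g .t1 := mk_eq_mk_of_rel .tau_s
lemma s_tau : g .s2 * g .s1 * g .t2 = g .t1 * g .s2 * g .s1 := mk_eq_mk_of_rel .s_tau
lemma comm1 : g .s1 * g .t1 = g .t1 * g .s1 := mk_eq_mk_of_rel .comm1

/-- `σ₁` as a unit of `SB3`. -/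
def u1 : SB3ˣ := ⟨g .s1, g .sb1, s1_sb1, sb1_s1⟩
/-- `σ₂` as a unit of `SB3`. -/
def u2 : SB3ˣ := ⟨g .s2, g .sb2, s2_sb2, sb2_s2⟩

/-- The group of units generated by `σ₁` and `σ₂`. -/
abbrev Braid : Subgroup SB3ˣ := Subgroup.closure {u1, u2}

/-- `σ₁` as an element of `Braid`. -/
def b1 : Braid := ⟨u1, Subgroup.subset_closure (by simp)⟩
/-- `σ₂` as an element of `Braid`. -/
def b2 : Braid := ⟨u2, Subgroup.subset_closure (by simp)⟩

/-- The inclusion of the braid group into `SB3`. -/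
def incl : Braid →* SB3 := (Units.coeHom SB3).comp Braid.subtype

lemma incl_b1 : incl b1 = g .s1 := rfl
lemma incl_b2 : incl b2 = g .s2 := rfl
lemma incl_b1_inv : incl b1⁻¹ = g .sb1 := rfl
lemma incl_b2_inv : incl b2⁻¹ = g .sb2 := rfl

lemma braid_b : b1 * b2 * b1 = b2 * b1 * b2 :=
  Subtype.ext (Units.ext braid)

lemma t2_eq : g .t2 = g .s1 * g .s2 * g .t1 * g .sb2 * g .sb1 := by
  rw [← tau_s, mul_assoc _ (g .s2), s2_sb2, mul_one, mul_assoc _ (g .s1), s1_sb1, mul_one]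

lemma closure_eq_top : Submonoid.closure (insert (g .t1) (Set.range incl)) = ⊤ := by
  rw [eq_top_iff, ← closure_range_of, Submonoid.closure_le]
  have hi : ∀ b, incl b ∈ Submonoid.closure (insert (g .t1) (Set.range incl)) :=
    fun b => Submonoid.subset_closure (Or.inr ⟨b, rfl⟩)
  have ht : g .t1 ∈ Submonoid.closure (insert (g .t1) (Set.range incl)) :=
    Submonoid.subset_closure (Or.inl rfl)
  rintro _ ⟨y, rfl⟩
  cases y with
  | s1 => exact hi b1
  | s2 => exact hi b2
  | sb1 => exact hi b1⁻¹
  | sb2 => exact hi b2⁻¹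
  | t1 => exact ht
  | t2 =>
    change g .t2 ∈ _
    rw [t2_eq]
    exact mul_mem (mul_mem (mul_mem (mul_mem (hi b1) (hi b2)) ht) (hi b2⁻¹)) (hi b1⁻¹)

open PositiveWord

/-- The HNN extension of the braid group with stable letter in the role of `τ₁`. -/
abbrev H : Type := Ext incl (g .t1)

lemma b1_mem : b1 ∈ commSubgroup incl (g .t1) := comm1

/-- The two relations that move `τ₁` to `τ₂` and back combine to a commutation relation. -/
lemma b2112_mem : b2 * b1 * (b1 * b2) ∈ commSubgroup incl (g .t1) := by
  change incl _ * _ = _ * incl _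
  simp only [map_mul, incl_b1, incl_b2]
  rw [mul_assoc, ← tau_s, mul_assoc (g .t2), ← mul_assoc _ (g .t2), s_tau]
  simp only [mul_assoc]

/-- The images in the HNN extension of the generators of `SG3`. -/
def toHGen : SG3pGen → H
  | .s1 => HNNExtension.of b1
  | .s2 => HNNExtension.of b2
  | .t1 => HNNExtension.t
  | .t2 => HNNExtension.of (b1 * b2) * HNNExtension.t * (HNNExtension.of (b1 * b2))⁻¹

lemma toHGen_rels : ∀ r ∈ SG3pRels, FreeGroup.lift toHGen r = 1 := by
  have h1 := t_mul_of_comm incl (g .t1) b1_mem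
  have h2 := t_mul_of_comm incl (g .t1) b2112_mem
  have hb := congrArg (HNNExtension.of : Braid →* H) braid_b
  simp only [map_mul] at h2 hb
  rintro r (rfl | rfl | rfl | rfl | rfl) <;>
    simp only [map_mul, map_inv, FreeGroup.lift_apply_of, toHGen, mul_inv_eq_one]
  · exact hb
  · group
  · generalize (HNNExtension.of b1 : H) = a at *
    generalize (HNNExtension.of b2 : H) = b at *
    generalize (HNNExtension.t : H) = t at *
    calc b * a * (a * b * t * (a * b)⁻¹) = b * a * (a * b) * t * (a * b)⁻¹ := by group
      _ = t * b * a := by rw [← h2]; group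
  · exact h1.symm
  · generalize (HNNExtension.of b1 : H) = a at *
    generalize (HNNExtension.of b2 : H) = b at *
    generalize (HNNExtension.t : H) = t at *
    -- conjugation by `σ₁σ₂` takes `σ₁` to `σ₂`
    have hba : b = a * b * a * (a * b)⁻¹ := by rw [hb]; group
    calc b * (a * b * t * (a * b)⁻¹) = (a * b * a * (a * b)⁻¹) * (a * b * t * (a * b)⁻¹) := by
          rw [← hba]
      _ = a * b * (a * t) * (a * b)⁻¹ := by group
      _ = (a * b * t * (a * b)⁻¹) * (a * b * a * (a * b)⁻¹) := by rw [← h1]; group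
      _ = a * b * t * (a * b)⁻¹ * b := by rw [← hba]

/-- The homomorphism from `SG3` to the HNN extension. -/
def toH : SG3p →* H := PresentedGroup.toGroup toHGen_rels

end SB3

/-- the natural monoid homomorphism `SB3 → SG3` sending
`σ_i ↦ σ_i`, `σ̄_i ↦ σ_i⁻¹`, `τ_i ↦ τ_i` is injective, i.e. `SB3` embeds in the
group `SG3`. -/
theorem sb3_embeds_in_sg3 (φ : SB3 →* SG3p)
    (h1 : φ (SB3.g .s1) = PresentedGroup.of .s1)
    (h2 : φ (SB3.g .s2) = PresentedGroup.of .s2)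
    (h3 : φ (SB3.g .sb1) = (PresentedGroup.of SG3pGen.s1 : SG3p)⁻¹)
    (h4 : φ (SB3.g .sb2) = (PresentedGroup.of SG3pGen.s2 : SG3p)⁻¹)
    (h5 : φ (SB3.g .t1) = PresentedGroup.of .t1)
    (h6 : φ (SB3.g .t2) = PresentedGroup.of .t2) :
    Function.Injective φ := by
  have hθ := PositiveWord.injective_of_generators SB3.incl (SB3.g .t1) SB3.closure_eq_top
    (SB3.toH.comp φ) ?_ ?_
  · exact Function.Injective.of_comp (f := SB3.toH) hθ
  · rintro ⟨u, hu⟩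
    have hb (b : SB3.Braid) : SB3.toH (φ (SB3.incl b)) =
        ((SB3.toH.comp φ).comp SB3.incl) b := rfl
    rw [MonoidHom.comp_apply, hb]
    induction hu using Subgroup.closure_induction with
    | mem y hy =>
      obtain rfl | rfl := hy
      · change SB3.toH (φ (SB3.g .s1)) = _
        rw [h1]
        exact PresentedGroup.toGroup.of SB3.toHGen_rels
      · change SB3.toH (φ (SB3.g .s2)) = _
        rw [h2]
        exact PresentedGroup.toGroup.of SB3.toHGen_rels
    | one => exact (map_one _).trans (map_one HNNExtension.of).symm
    | mul y z hy hz ihy ihz =>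
      have := congrArg₂ (· * ·) ihy ihz
      simp only [← map_mul] at this
      exact this
    | inv y hy ih =>
      have := congrArg (·⁻¹) ih
      simp only [← map_inv] at this
      exact this
  · rw [MonoidHom.comp_apply, h5]
    exact PresentedGroup.toGroup.of SB3.toHGen_rels
end
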